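/- Let N ≥ 1 and let G : ℝ^N → ℝ^N be continuous. Suppose there exists an invertible linear map B : ℝ^N → ℝ^N and constants b₁, b₂ > 0 with b₁‖X‖ ≤ ‖BX‖ ≤ b₂‖X‖ for all X, and a radius q > 0 such that ⟨G(X), BX⟩ > 0 whenever ‖X‖ ≥ q. Then there exists U ∈ ℝ^N with G(U) = 0. -/

import Mathlib

open Metric MeasureTheory Set Filter Topology Polynomial in
/-- A Lipschitz perturbation of the identity that vanishes on the sphere maps the closed ball
onto itself. -/
theorem surjOn_closedBall_add_of_lipschitzOnWith {E : Type*} [NormedAddCommGroup E]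
    [NormedSpace ℝ E] [CompleteSpace E] {R : ℝ} (hR : 0 < R) {k : E → E} {c : NNReal}
    (hc : 2 * c < 1) (hk : LipschitzOnWith c k (closedBall 0 R))
    (hk0 : ∀ x, ‖x‖ = R → k x = 0) :
    SurjOn (fun x => x + k x) (closedBall 0 R) (closedBall 0 R) := by
  intro y hy
  set P : E → E := fun z => (R / max R ‖z‖) • z with hP
  have hM : ∀ z : E, 0 < max R ‖z‖ := fun z => lt_max_of_lt_left hR
  have hPmem : ∀ z, P z ∈ closedBall (0 : E) R := fun z => by
    rw [mem_closedBall_zero_iff, norm_smul, Real.norm_of_nonneg (div_nonneg hR.le (hM z).le),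
      div_mul_eq_mul_div, div_le_iff₀ (hM z)]
    exact mul_le_mul_of_nonneg_left (le_max_right _ _) hR.le
  have hPlip : LipschitzWith 2 P := LipschitzWith.of_dist_le_mul fun z w => by
    rw [dist_eq_norm, dist_eq_norm]
    have hsplit : P z - P w = (R / max R ‖z‖) • (z - w) +
        (R / max R ‖z‖ - R / max R ‖w‖) • w := by
      simp only [hP]; module
    have h1 : ‖(R / max R ‖z‖) • (z - w)‖ ≤ ‖z - w‖ := by
      rw [norm_smul, Real.norm_of_nonneg (div_nonneg hR.le (hM z).le)]
      exact mul_le_of_le_one_left (norm_nonneg _) ((div_le_one (hM z)).2 (le_max_left _ _))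
    have h2 : ‖(R / max R ‖z‖ - R / max R ‖w‖) • w‖ ≤ ‖z - w‖ := by
      have hdiff : |max R ‖w‖ - max R ‖z‖| ≤ ‖z - w‖ := by
        rw [max_comm R, max_comm R]
        refine (abs_max_sub_max_le_abs _ _ _).trans ?_
        rw [abs_sub_comm]
        exact abs_norm_sub_norm_le z w
      have heq : R / max R ‖z‖ - R / max R ‖w‖ =
          (R / max R ‖z‖) * ((max R ‖w‖ - max R ‖z‖) / max R ‖w‖) := by
        have := (hM z).ne'
        have := (hM w).ne'
        field_simp
      rw [norm_smul, heq, norm_mul, Real.norm_of_nonneg (div_nonneg hR.le (hM z).le), norm_div,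
        Real.norm_of_nonneg (hM w).le, Real.norm_eq_abs, mul_assoc, div_mul_eq_mul_div _ (max R ‖w‖)]
      have h3 : |max R ‖w‖ - max R ‖z‖| * ‖w‖ / max R ‖w‖ ≤ |max R ‖w‖ - max R ‖z‖| := by
        rw [div_le_iff₀ (hM w)]
        exact mul_le_mul_of_nonneg_left (le_max_right _ _) (abs_nonneg _)
      exact (mul_le_of_le_one_left (by have := hM w; positivity)
        ((div_le_one (hM z)).2 (le_max_left _ _))).trans (h3.trans hdiff)
    rw [hsplit]
    refine (norm_add_le _ _).trans ?_
    push_cast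
    linarith
  have hcontr : ContractingWith (2 * c) fun x => y - k (P x) := by
    refine ⟨hc, LipschitzWith.of_dist_le_mul fun z w => ?_⟩
    have h1 := hk.dist_le_mul _ (hPmem z) _ (hPmem w)
    have h2 := hPlip.dist_le_mul z w
    rw [dist_sub_left]
    push_cast at h2 ⊢
    nlinarith [c.coe_nonneg]
  obtain ⟨x, hx, -⟩ := hcontr.exists_fixedPoint 0 (edist_ne_top _ _)
  replace hx : y - k (P x) = x := hx
  rcases le_or_gt ‖x‖ R with h | h
  · have hPx : P x = x := by simp [hP, max_eq_left h, hR.ne']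
    rw [hPx] at hx
    exact ⟨x, mem_closedBall_zero_iff.2 h, by simp only; nth_rewrite 1 [← hx]; abel⟩
  · have hPx : ‖P x‖ = R := by
      have : 0 < ‖x‖ := hR.trans h
      simp only [hP]
      rw [max_eq_right h.le, norm_smul, norm_div, norm_norm, Real.norm_of_nonneg hR.le]
      field_simp
    rw [hk0 _ hPx, sub_zero] at hx
    rw [← hx] at h
    exact absurd (mem_closedBall_zero_iff.1 hy) h.not_ge

open Polynomial in
/-- Along a line of endomorphisms through the identity the determinant is polynomial of degree at
most the dimension, so that it is given by Lagrange interpolation. -/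
theorem det_id_add_eq_sum_lagrange_basis {E : Type*} [NormedAddCommGroup E] [NormedSpace ℝ E]
    [FiniteDimensional ℝ E] {s : Finset ℕ} {v : ℕ → ℝ} (hv : Set.InjOn v s)
    (hs : Module.finrank ℝ E < s.card) (A : E →L[ℝ] E) :
    (ContinuousLinearMap.id ℝ E + A).det =
      ∑ i ∈ s, (Lagrange.basis s v i).eval 1 * (ContinuousLinearMap.id ℝ E + v i • A).det := by
  set b := Module.finBasis ℝ E
  set M := LinearMap.toMatrix b b (A : E →ₗ[ℝ] E) with hM
  set p : ℝ[X] := Matrix.det ((X : ℝ[X]) • M.map C + (1 : Matrix _ _ ℝ).map C) with hp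
  have heval : ∀ t : ℝ, p.eval t = (ContinuousLinearMap.id ℝ E + t • A).det := fun t => by
    rw [ContinuousLinearMap.det, ← LinearMap.det_toMatrix b, hp, ← coe_evalRingHom,
      RingHom.map_det]
    congr 1
    ext i j
    simp [hM, LinearMap.toMatrix_apply, Matrix.one_apply, Finsupp.single_apply, eq_comm, add_comm,
      apply_ite, mul_comm t]
  have hdeg : p.degree < s.card := by
    refine lt_of_le_of_lt degree_le_natDegree ?_
    have := Polynomial.natDegree_det_X_add_C_le M 1
    rw [Fintype.card_fin] at this
    exact_mod_cast this.trans_lt hs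
  have h1 := congrArg (eval 1) (Lagrange.eq_interpolate hv hdeg)
  rw [heval, one_smul] at h1
  rw [h1, Lagrange.interpolate_apply, eval_finsetSum]
  simp [heval, mul_comm]

open Metric MeasureTheory Set Filter Topology in
/-- There is no `C¹` retraction of a closed ball onto its boundary sphere. -/
theorem no_contDiff_retraction_sphere {E : Type*} [NormedAddCommGroup E] [InnerProductSpace ℝ E]
    [FiniteDimensional ℝ E] {R : ℝ} (hR : 0 < R) {F : E → E} (hF : ContDiff ℝ 1 F)
    (hnorm : ∀ x, ‖F x‖ = R) (hid : ∀ x, ‖x‖ = R → F x = x) : False := by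
  borelize E
  set μ : Measure E := Measure.addHaar
  set K : Set E := closedBall 0 R
  have hKc : IsCompact K := isCompact_closedBall 0 R
  have hKm : MeasurableSet K := hKc.measurableSet
  set A : E → E →L[ℝ] E := fun x => fderiv ℝ F x - ContinuousLinearMap.id ℝ E with hA
  have hAcont : Continuous A := (hF.continuous_fderiv one_ne_zero).sub continuous_const
  have hder : ∀ x, HasFDerivAt (fun x => F x - x) (A x) x := fun x =>
    ((hF.differentiable one_ne_zero) x).hasFDerivAt.sub (hasFDerivAt_id x)
  have hdetcont : Continuous (ContinuousLinearMap.det : (E →L[ℝ] E) → ℝ) :=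
    ContinuousLinearMap.continuous_det
  have hdet0 : ∀ x, (ContinuousLinearMap.id ℝ E + A x).det = 0 := fun x => by
    have h1 : ContinuousLinearMap.id ℝ E + A x = fderiv ℝ F x := by simp [hA]
    rw [h1]
    by_contra hne
    have hconst : HasFDerivAt (fun x => inner ℝ (F x) (F x)) (0 : E →L[ℝ] ℝ) x := by
      simp only [real_inner_self_eq_norm_sq, hnorm]
      exact hasFDerivAt_const _ _
    have hFx := ((hF.differentiable one_ne_zero) x).hasFDerivAt
    have horth : ∀ w, inner ℝ (F x) (fderiv ℝ F x w) = 0 := fun w => by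
      have := DFunLike.congr_fun ((hFx.inner ℝ hFx).unique hconst) w
      simp [real_inner_comm] at this
      linarith
    obtain ⟨w, hw⟩ := (LinearEquiv.ofIsUnitDet (f := (fderiv ℝ F x : E →ₗ[ℝ] E))
      (v := Module.finBasis ℝ E) (v' := Module.finBasis ℝ E)
      (by rw [LinearMap.det_toMatrix]; exact isUnit_iff_ne_zero.2 hne)).surjective (F x)
    have h2 := horth w
    replace hw : fderiv ℝ F x w = F x := hw
    rw [hw, real_inner_self_eq_norm_sq, hnorm] at h2
    exact (pow_pos hR 2).ne' h2
  obtain ⟨C, hC⟩ : ∃ C : NNReal, LipschitzOnWith C (fun x => F x - x) K := by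
    obtain ⟨C, hC⟩ := hKc.exists_bound_of_continuousOn hAcont.continuousOn
    refine ⟨C.toNNReal, (convex_closedBall (0 : E) R).lipschitzOnWith_of_nnnorm_hasFDerivWithin_le
      (fun x _ => (hder x).hasFDerivWithinAt) fun x hx => ?_⟩
    exact NNReal.le_toNNReal_of_coe_le (hC x hx)
  have hpos : ∀ᶠ t : ℝ in 𝓝 0, ∀ x ∈ K, 0 < (ContinuousLinearMap.id ℝ E + t • A x).det := by
    refine hKc.eventually_forall_of_forall_eventually fun x _ => ?_
    have hc : Continuous fun z : ℝ × E => (ContinuousLinearMap.id ℝ E + z.1 • A z.2).det :=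
      hdetcont.comp (by fun_prop)
    refine hc.continuousAt.eventually (lt_mem_nhds ?_)
    simp [ContinuousLinearMap.det]
  have hsmall : ∀ᶠ t : ℝ in 𝓝 0, 2 * (t * C) < 1 := by
    have hc : Continuous fun t : ℝ => 2 * (t * C) := by fun_prop
    exact hc.continuousAt.eventually (gt_mem_nhds (by simp))
  have hsmall' : ∀ᶠ t : ℝ in 𝓝 0, t < 1 := gt_mem_nhds one_pos
  obtain ⟨δ, hδ, hball⟩ := Metric.eventually_nhds_iff.1 (hpos.and (hsmall.and hsmall'))
  have hvol : ∀ t : ℝ, 0 < t → t < δ →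
      IntegrableOn (fun x => (ContinuousLinearMap.id ℝ E + t • A x).det) K μ ∧
      ∫ x in K, (ContinuousLinearMap.id ℝ E + t • A x).det ∂μ = μ.real K := fun t ht htδ => by
    obtain ⟨hp, hs, h1⟩ := hball (y := t) (by simpa [abs_of_pos ht] using htδ)
    have hcont : Continuous fun x => (ContinuousLinearMap.id ℝ E + t • A x).det :=
      hdetcont.comp (by fun_prop)
    refine ⟨hcont.continuousOn.integrableOn_compact hKc, ?_⟩
    set c : NNReal := t.toNNReal * C with hc
    have hcc : (c : ℝ) = t * C := by simp [hc, ht.le]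
    have hlip : LipschitzOnWith c (fun x => t • (F x - x)) K :=
      LipschitzOnWith.of_dist_le_mul fun x hx y hy => by
        rw [dist_smul₀, Real.norm_of_nonneg ht.le, hcc, mul_assoc]
        exact mul_le_mul_of_nonneg_left (hC.dist_le_mul x hx y hy) ht.le
    have hsurj := surjOn_closedBall_add_of_lipschitzOnWith hR (k := fun x => t • (F x - x))
      (c := c) (by rw [← NNReal.coe_lt_coe]; push_cast; rw [hcc]; exact hs) hlip
      fun x hx => by simp [hid x hx]
    have hmaps : MapsTo (fun x => x + t • (F x - x)) K K := fun x hx => by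
      have := (convex_closedBall (0 : E) R).add_smul_sub_mem hx
        (y := F x) (by simp [hnorm x]) ⟨ht.le, h1.le⟩
      exact this
    have hinj : InjOn (fun x => x + t • (F x - x)) K := fun x hx y hy hxy => by
      have h2 := hlip.dist_le_mul x hx y hy
      have h3 : dist (t • (F x - x)) (t • (F y - y)) = dist x y := by
        rw [dist_comm x y, dist_eq_norm, dist_eq_norm]
        congr 1
        simp only at hxy
        rw [sub_eq_sub_iff_add_eq_add, add_comm, hxy, add_comm]
      rw [h3, hcc] at h2
      have h4 : dist x y = 0 := by nlinarith [dist_nonneg (x := x) (y := y)]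
      exact dist_eq_zero.1 h4
    have himage := integral_image_eq_integral_abs_det_fderiv_smul μ hKm
      (f' := fun x => ContinuousLinearMap.id ℝ E + t • A x)
      (fun x _ => ((hasFDerivAt_id x).add ((hder x).const_smul t)).hasFDerivWithinAt) hinj
      fun _ => (1 : ℝ)
    rw [show (id + t • fun x => F x - x) '' K = K from
      Subset.antisymm hmaps.image_subset hsurj] at himage
    simp only [smul_eq_mul, mul_one, integral_const, MeasurableSet.univ, measureReal_restrict_apply,
      univ_inter] at himage
    rw [himage]
    exact setIntegral_congr_fun hKm fun x hx => (abs_of_pos (hp x hx)).symm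
  set s := Finset.range (Module.finrank ℝ E + 1)
  set v : ℕ → ℝ := fun i => δ / (i + 2) with hvdef
  have hv : Set.InjOn v s := fun i _ j _ hij => by
    have hi : (0 : ℝ) < i + 2 := by positivity
    have hj : (0 : ℝ) < j + 2 := by positivity
    simp only [hvdef] at hij
    rw [div_eq_div_iff hi.ne' hj.ne'] at hij
    have := mul_left_cancel₀ hδ.ne' hij
    exact_mod_cast (add_right_cancel this).symm
  have hv0 : ∀ i, 0 < v i := fun i => by positivity
  have hvδ : ∀ i, v i < δ := fun i =>
    div_lt_self hδ (by linarith [(Nat.cast_nonneg i : (0:ℝ) ≤ i)])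
  have hzero : ∫ x in K, (ContinuousLinearMap.id ℝ E + A x).det ∂μ = 0 := by simp [hdet0]
  have hs : Module.finrank ℝ E < s.card := by simp [s]
  simp_rw [fun x => det_id_add_eq_sum_lagrange_basis hv hs (A x)] at hzero
  rw [integral_finsetSum _ fun i _ => ((hvol _ (hv0 i) (hvδ i)).1.const_mul _)] at hzero
  simp_rw [integral_const_mul, (hvol _ (hv0 _) (hvδ _)).2] at hzero
  rw [← Finset.sum_mul, ← Polynomial.eval_finsetSum, Lagrange.sum_basis hv (by simp [s]),
    Polynomial.eval_one, one_mul] at hzero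
  have hKpos : 0 < μ.real K := ENNReal.toReal_pos
    (measure_closedBall_pos μ 0 hR).ne' hKc.measure_lt_top.ne
  exact hKpos.ne' hzero

open Metric Set Filter Topology in
/-- A continuous vector field pointing outwards outside of a ball has a zero. -/
theorem exists_eq_zero_of_continuous_of_inner_pos {E : Type*} [NormedAddCommGroup E]
    [InnerProductSpace ℝ E] [FiniteDimensional ℝ E] {H : E → E} (hH : Continuous H) {q : ℝ}
    (hq : 0 < q) (hpos : ∀ x, q ≤ ‖x‖ → 0 < inner ℝ (H x) x) : ∃ x, H x = 0 := by
  by_contra! hne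
  set σ : E → ℝ := fun x => max 0 (min 1 (‖x‖ - q)) with hσ
  have hσ0 : ∀ x, 0 ≤ σ x := fun x => le_max_left _ _
  have hσ1 : ∀ x, σ x ≤ 1 := fun x => max_le zero_le_one (min_le_left _ _)
  have hσout : ∀ x, q + 1 ≤ ‖x‖ → σ x = 1 := fun x hx => by
    simp only [hσ]
    rw [min_eq_left (by linarith), max_eq_right zero_le_one]
  set f : E → E := fun x => (1 - σ x) • H x + σ x • x with hf
  have hfc : Continuous f := by fun_prop
  have hfout : ∀ x, q + 1 ≤ ‖x‖ → f x = x := fun x hx => by simp [hf, hσout x hx]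
  have hfne : ∀ x, f x ≠ 0 := fun x h0 => by
    rcases lt_or_ge ‖x‖ q with hx | hx
    · have : σ x = 0 := max_eq_left ((min_le_right _ _).trans (by linarith))
      simp only [hf, this] at h0
      exact hne x (by simpa using h0)
    · have h1 : inner ℝ (f x) x = (1 - σ x) * inner ℝ (H x) x + σ x * ‖x‖ ^ 2 := by
        simp [hf, inner_add_left, real_inner_smul_left]
      rw [h0, inner_zero_left] at h1
      have h2 := hpos x hx
      have h3 : 0 < ‖x‖ ^ 2 := pow_pos (hq.trans_le hx) 2
      rcases (hσ0 x).eq_or_lt with h | h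
      · rw [← h] at h1; linarith
      · nlinarith [mul_pos h h3, mul_nonneg (sub_nonneg.2 (hσ1 x)) h2.le]
  obtain ⟨g, hg, hgf, hgeq, -⟩ := hfc.exists_contDiff_approx_and_eqOn 1 (ε := fun x => ‖f x‖)
    hfc.norm (fun x => norm_pos_iff.2 (hfne x)) (S := {x | q + 2 ≤ ‖x‖}) (U := {x | q + 1 < ‖x‖})
    (isClosed_le continuous_const continuous_norm)
    ((isOpen_lt continuous_const continuous_norm).mem_nhdsSet.2 fun x hx => by
      simp only [mem_ofPred_eq] at hx ⊢; linarith)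
    (contDiffOn_id.congr fun x hx => hfout x (le_of_lt hx))
  have hgne : ∀ x, g x ≠ 0 := fun x h0 => by
    have := hgf x
    rw [h0, dist_zero_left] at this
    exact this.false
  have hR : 0 < q + 2 := by linarith
  refine no_contDiff_retraction_sphere hR (F := fun x => ((q + 2) / ‖g x‖) • g x) ?_ ?_ ?_
  · exact (contDiff_const.div (hg.norm ℝ hgne) fun x => norm_ne_zero_iff.2 (hgne x)).smul hg
  · intro x
    rw [norm_smul, norm_div, norm_norm, Real.norm_of_nonneg hR.le,
      div_mul_cancel₀ _ (norm_ne_zero_iff.2 (hgne x))]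
  · intro x hx
    have hgx : g x = x := (hgeq (show q + 2 ≤ ‖x‖ from hx.ge)).trans (hfout x (by linarith))
    simp only [hgx, hx, div_self hR.ne', one_smul]

theorem stmt12 (N : ℕ) (hN : 1 ≤ N)
    (G : EuclideanSpace ℝ (Fin N) → EuclideanSpace ℝ (Fin N)) (hG : Continuous G)
    (B : EuclideanSpace ℝ (Fin N) ≃ₗ[ℝ] EuclideanSpace ℝ (Fin N))
    (b₁ b₂ : ℝ) (hb₁ : 0 < b₁) (hb₂ : 0 < b₂)
    (hB : ∀ X, b₁ * ‖X‖ ≤ ‖B X‖ ∧ ‖B X‖ ≤ b₂ * ‖X‖)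
    (q : ℝ) (hq : 0 < q)
    (hpos : ∀ X, q ≤ ‖X‖ → 0 < inner (G X) (B X) (𝕜 := ℝ)) :
    ∃ U, G U = 0 := by
  set L : EuclideanSpace ℝ (Fin N) →ₗ[ℝ] EuclideanSpace ℝ (Fin N) := B.toLinearMap
  have hL : ∀ X Y, inner ℝ (L.adjoint Y) X = inner ℝ Y (B X) := L.adjoint_inner_left
  obtain ⟨U, hU⟩ := exists_eq_zero_of_continuous_of_inner_pos
    (L.adjoint.continuous_of_finiteDimensional.comp hG) hq
    fun X hX => (hpos X hX).trans_eq (hL X (G X)).symm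
  refine ⟨U, ?_⟩
  have h := hL (B.symm (G U)) (G U)
  rw [show L.adjoint (G U) = 0 from hU, inner_zero_left, B.apply_symm_apply] at h
  exact inner_self_eq_zero.1 h.symm
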